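/- arXiv:1208.5216 — 2 statements merged into one kernel-verified Lean document; each statement's English description precedes it below -/
import Mathlib

section
/- In the direct product construction of a DSS from a perfect regular DSS(v,m,q,ρ) and a perfect regular DSS(v',m',q',ρ') over coprime moduli v and v', every outer difference of the form (0,b) with b ≠ 0 occurs exactly ρ'mq times in the product family {Q_i × Q'_j}. -/
/-- Number of occurrences of `d` as an outer difference (difference of elements
from distinct member sets) in the family `Q`. -/
def outerCount {G ι : Type*} [AddCommGroup G] [DecidableEq G] [Fintype ι] [DecidableEq ι]
    (Q : ι → Finset G) (d : G) : ℕ :=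
  ∑ i : ι, ∑ j : ι, if i = j then 0 else ((Q i ×ˢ Q j).filter (fun p => p.1 - p.2 = d)).card

/-- Number of occurrences of `d` as an inner difference (difference of two distinct
elements of a single member set) in the family `Q`. -/
def innerCount {G ι : Type*} [AddCommGroup G] [DecidableEq G] [Fintype ι]
    (Q : ι → Finset G) (d : G) : ℕ :=
  ∑ i : ι, ((Q i ×ˢ Q i).filter (fun p => p.1 - p.2 = d ∧ p.1 ≠ p.2)).card

/-! The differences of `Q i × Q' j` and `Q k × Q' l` equal to `(0, b)` number
`|Q i ∩ Q k| * |Q' j ∩ (b + Q' l)|`. Disjointness of the `Q i` leaves only the terms with `k = i`,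
and then the two product sets are distinct exactly when `j ≠ l`: each `i` therefore contributes
`|Q i|` copies of the outer differences of `Q'` equal to `b`. -/

section OuterCount

open Finset Function
open scoped Pointwise

theorem prodMk_vadd_product {G G' : Type*} [Add G] [Add G'] [DecidableEq G] [DecidableEq G']
    (a : G) (b : G') (A : Finset G) (B : Finset G') :
    (a, b) +ᵥ A ×ˢ B = (a +ᵥ A) ×ˢ (b +ᵥ B) :=
  prodMap_image_product (a +ᵥ ·) (b +ᵥ ·) A B

theorem card_product_inter_prodMk_vadd_product {G G' : Type*} [Add G] [Add G'] [DecidableEq G]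
    [DecidableEq G'] (A C : Finset G) (B D : Finset G') (a : G) (b : G') :
    #((A ×ˢ B) ∩ ((a, b) +ᵥ C ×ˢ D)) = #(A ∩ (a +ᵥ C)) * #(B ∩ (b +ᵥ D)) := by
  rw [prodMk_vadd_product, product_inter_product, card_product]

theorem card_inter_eq_ite_of_pairwise_disjoint {ι α : Type*} [DecidableEq ι] [DecidableEq α]
    {Q : ι → Finset α} (hQ : Pairwise (Disjoint on Q)) (i k : ι) :
    #(Q i ∩ Q k) = if i = k then #(Q i) else 0 := by
  split_ifs with hik
  · rw [← hik, inter_self]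
  · exact card_eq_zero.mpr (disjoint_iff_inter_eq_empty.mp (hQ hik))

variable {G G' ι ι' : Type*} [AddCommGroup G] [AddCommGroup G'] [DecidableEq G] [DecidableEq G']
  [Fintype ι] [DecidableEq ι] [Fintype ι'] [DecidableEq ι']

theorem outerCount_eq_sum_card_inter_vadd (Q : ι → Finset G) (d : G) :
    outerCount Q d = ∑ i, ∑ j, if i = j then 0 else #(Q i ∩ (d +ᵥ Q j)) := by
  simp only [outerCount, card_sub_eq, card_inter_vadd]

theorem stmt_1_general {Q : ι → Finset G} (hQ : Pairwise (Disjoint on Q)) (Q' : ι' → Finset G')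
    (b : G') :
    outerCount (fun ij : ι × ι' => Q ij.1 ×ˢ Q' ij.2) (0, b) = (∑ i, #(Q i)) * outerCount Q' b := by
  have summand_eq_ite (i k : ι) (j l : ι') :
      (if (i, j) = (k, l) then 0 else #(Q i ∩ Q k) * #(Q' j ∩ (b +ᵥ Q' l))) =
        if i = k then #(Q i) * (if j = l then 0 else #(Q' j ∩ (b +ᵥ Q' l))) else 0 := by
    rw [card_inter_eq_ite_of_pairwise_disjoint hQ]
    by_cases hik : i = k <;> simp [hik]
  calc
    outerCount (fun ij : ι × ι' => Q ij.1 ×ˢ Q' ij.2) (0, b)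
      = ∑ i, ∑ j, ∑ k, ∑ l,
          if (i, j) = (k, l) then 0 else #(Q i ∩ Q k) * #(Q' j ∩ (b +ᵥ Q' l)) := by
        simp only [outerCount_eq_sum_card_inter_vadd, card_product_inter_prodMk_vadd_product,
          zero_vadd, Fintype.sum_prod_type]
    _ = ∑ i, ∑ j, ∑ l, #(Q i) * (if j = l then 0 else #(Q' j ∩ (b +ᵥ Q' l))) := by
        refine sum_congr rfl fun i _ => sum_congr rfl fun j _ => ?_
        rw [sum_comm]
        simp only [summand_eq_ite, sum_ite_eq, mem_univ, if_true]
    _ = (∑ i, #(Q i)) * outerCount Q' b := by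
        simp only [outerCount_eq_sum_card_inter_vadd Q' b, sum_mul_sum univ univ, mul_sum]

end OuterCount

theorem stmt_1 (v v' m m' q q' ρ ρ' : ℕ) (hv : 0 < v) (hv' : 0 < v')
    (hco : Nat.Coprime v v')
    (Q : Fin q → Finset (ZMod v)) (Q' : Fin q' → Finset (ZMod v'))
    (hQdisj : ∀ i j, i ≠ j → Disjoint (Q i) (Q j))
    (hQcard : ∀ i, (Q i).card = m)
    (hQperf : ∀ d : ZMod v, d ≠ 0 → outerCount Q d = ρ)
    (hQ'disj : ∀ i j, i ≠ j → Disjoint (Q' i) (Q' j))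
    (hQ'card : ∀ i, (Q' i).card = m')
    (hQ'perf : ∀ d : ZMod v', d ≠ 0 → outerCount Q' d = ρ') :
    ∀ b : ZMod v', b ≠ 0 →
      outerCount (fun ij : Fin q × Fin q' => Q ij.1 ×ˢ Q' ij.2)
        ((0 : ZMod v), b) = ρ' * m * q := by
  intro b hb
  simp [stmt_1_general hQdisj, hQ'perf b hb, hQcard, mul_comm, mul_left_comm]
end

section
/- Let p = 16n²+1 be an odd prime. Then the quadratic residues and quadratic non-residues do not suffice; rather, the two 4th-power cyclotomic classes C_0^4 and C_2^4 (each of size 4n²) form a perfect regular DSS(16n²+1, 4n², 2, 2n²): every nonzero element of F_p occurs exactly 2n² times as a difference a − b with a ∈ C_0^4, b ∈ C_2^4 or a ∈ C_2^4, b ∈ C_0^4. -/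
/-! Let `χ` be the quartic Gaussian-integer character with `χ α = i`, so that `C_0` and `C_2` are
the fibres of `χ` over `1` and `-1`. By polarization the outer difference count is half the
difference of the autocorrelations of `1_{C_0} + 1_{C_2} = (1 + χ²) / 2` and
`1_{C_0} - 1_{C_2} = (χ + χ⁻¹) / 2`. Each is a combination of Jacobi sums, and with `J = J(χ, χ)`
the number `N(d)` of occurrences of `d` satisfies `8 N(d) = p - 1 - 2 χ²(d) (1 + Re J)`. The norm of
`J` is `p = (4n)² + 1²`, so uniqueness of the representation as a sum of two squares leaves
`Re J ∈ {±1, ±4n}`, while integrality of `N(1)` forces `Re J ≡ -1 (mod 4)`. Hence `Re J = -1` and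
`N(d) = (p - 1) / 8` for every `d ≠ 0`. -/

section Correlation

variable {G R : Type*} [AddCommGroup G] [Fintype G] [CommRing R]

/-- The cross-correlation of two functions on a finite abelian group. For indicator functions of
sets `A` and `B`, it counts the representations `d = a - b` with `a ∈ A` and `b ∈ B`. -/
def correlation (f g : G → R) (d : G) : R :=
  ∑ x, f x * g (x - d)

lemma correlation_add_add (f g h k : G → R) (d : G) :
    correlation (f + g) (h + k) d =
      correlation f h d + correlation f k d + correlation g h d + correlation g k d := by
  simp only [correlation, Pi.add_apply, ← Finset.sum_add_distrib]
  exact Finset.sum_congr rfl fun x _ => by ring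

lemma two_mul_correlation_add_swap (f g : G → R) (d : G) :
    2 * (correlation f g d + correlation g f d) =
      correlation (f + g) (f + g) d - correlation (f - g) (f - g) d := by
  simp only [correlation, Pi.add_apply, Pi.sub_apply, ← Finset.sum_add_distrib,
    ← Finset.sum_sub_distrib, Finset.mul_sum]
  exact Finset.sum_congr rfl fun x _ => by ring

lemma correlation_two_mul (f g : G → R) (d : G) :
    correlation (2 * f) (2 * g) d = 4 * correlation f g d := by
  simp only [correlation, Pi.mul_apply, Pi.ofNat_apply, Finset.mul_sum]
  exact Finset.sum_congr rfl fun x _ => by ring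

variable [DecidableEq G]

lemma card_filter_sub_eq_correlation (A B : Finset G) (d : G) :
    (((A ×ˢ B).filter (fun p => p.1 - p.2 = d)).card : R) =
      correlation ((A : Set G).indicator 1) ((B : Set G).indicator 1) d := by
  have sub_eq_iff (x y : G) : x - y = d ↔ x - d = y := by
    rw [sub_eq_iff_eq_add', sub_eq_iff_eq_add]
  rw [Finset.card_filter, Finset.sum_product, correlation]
  simp only [sub_eq_iff, Finset.sum_ite_eq, Nat.cast_sum, Nat.cast_ite, Nat.cast_one,
    Nat.cast_zero, Set.indicator_apply, Finset.mem_coe, Pi.one_apply, ite_mul, one_mul, zero_mul,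
    Finset.sum_ite_mem, Finset.univ_inter]

lemma outerCount_pair_eq_correlation (A B : Finset G) (d : G) :
    (outerCount ![A, B] d : R) =
      correlation ((A : Set G).indicator 1) ((B : Set G).indicator 1) d +
        correlation ((B : Set G).indicator 1) ((A : Set G).indicator 1) d := by
  simp [outerCount, Fin.sum_univ_two, card_filter_sub_eq_correlation]

end Correlation

section CharacterCorrelation

variable {F R : Type*} [Field F] [Fintype F] [CommRing R]

lemma correlation_mulChar (φ ψ : MulChar F R) {d : F} (hd : d ≠ 0) :
    correlation φ ψ d = ψ (-1) * (φ * ψ) d * jacobiSum φ ψ := by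
  rw [correlation, jacobiSum, Finset.mul_sum, ← Equiv.sum_comp (Equiv.mulLeft₀ d hd)]
  refine Finset.sum_congr rfl fun x _ => ?_
  have factor : d * x - d = -1 * d * (1 - x) := by ring
  simp only [Equiv.mulLeft₀_apply, factor, map_mul, MulChar.mul_apply]
  ring

variable [IsDomain R]

lemma correlation_mulChar_inv {χ : MulChar F R} (hχ : χ ≠ 1) {d : F} (hd : d ≠ 0) :
    correlation χ ⇑(χ⁻¹) d = -1 := by
  have hneg : χ⁻¹ (-1) * χ (-1) = 1 := by
    rw [← MulChar.mul_apply, inv_mul_cancel, MulChar.one_apply isUnit_one.neg]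
  rw [correlation_mulChar _ _ hd, mul_inv_cancel, MulChar.one_apply hd.isUnit,
    jacobiSum_nontrivial_inv hχ]
  linear_combination -hneg

lemma correlation_one_add_quadratic {η : MulChar F R} (hη : η ≠ 1) (hη_inv : η⁻¹ = η)
    (hη_neg : η (-1) = 1) {d : F} (hd : d ≠ 0) :
    correlation (⇑(1 : MulChar F R) + ⇑η) (⇑(1 : MulChar F R) + ⇑η) d =
      Fintype.card F - 3 - 2 * η d := by
  have hηη : correlation η η d = -1 := by simpa only [hη_inv] using correlation_mulChar_inv hη hd
  have hone : (1 : MulChar F R) (-1) = 1 := MulChar.one_apply isUnit_one.neg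
  rw [correlation_add_add, hηη, correlation_mulChar _ _ hd, correlation_mulChar _ _ hd,
    correlation_mulChar _ _ hd, jacobiSum_one_one, jacobiSum_comm η, jacobiSum_one_nontrivial hη,
    mul_one, one_mul, mul_one, hone, hη_neg, MulChar.one_apply hd.isUnit]
  ring

lemma correlation_add_inv {χ : MulChar F R} (hχ : χ ≠ 1) (hχ_neg : χ (-1) = 1)
    {d : F} (hd : d ≠ 0) :
    correlation (⇑χ + ⇑(χ⁻¹)) (⇑χ + ⇑(χ⁻¹)) d =
      (χ ^ 2) d * jacobiSum χ χ + (χ⁻¹ ^ 2) d * jacobiSum χ⁻¹ χ⁻¹ - 2 := by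
  have hinv : correlation ⇑(χ⁻¹) χ d = -1 := by
    simpa only [inv_inv] using correlation_mulChar_inv (inv_ne_one.mpr hχ) hd
  have hinv_neg : χ⁻¹ (-1) = 1 := by rw [MulChar.inv_apply_eq_inv, hχ_neg, Ring.inverse_one]
  rw [correlation_add_add, correlation_mulChar_inv hχ hd, hinv, correlation_mulChar _ _ hd,
    correlation_mulChar _ _ hd, hχ_neg, hinv_neg, sq, sq]
  ring

end CharacterCorrelation

section QuarticCharacter

variable {F R : Type*} [Field F] [CommRing R]

lemma mulChar_neg_one_eq_one_of_pow_eq_one [Fintype F] {χ : MulChar F R} {m : ℕ} (hχ : χ ^ m = 1)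
    (hm : 2 * m ∣ Fintype.card F - 1) : χ (-1) = 1 := by
  classical
  obtain ⟨g, hg⟩ := IsCyclic.exists_generator (α := Fˣ)
  obtain ⟨k, hk⟩ := mem_powers_iff_mem_zpowers.mpr (hg (-1))
  have hg_order : orderOf g = Fintype.card F - 1 := by
    rw [orderOf_eq_card_of_forall_mem_zpowers hg, Nat.card_eq_fintype_card, Fintype.card_units]
  have hg_pow : g ^ (2 * k) = 1 := by
    simp only [mul_comm 2 k, pow_mul] at hk ⊢
    rw [hk, neg_one_sq]
  obtain ⟨t, rfl⟩ : m ∣ k :=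
    Nat.dvd_of_mul_dvd_mul_left two_pos (hm.trans (hg_order ▸ orderOf_dvd_of_pow_eq_one hg_pow))
  calc χ (-1) = χ ((g ^ (m * t) : Fˣ) : F) := by
        rw [show g ^ (m * t) = -1 from hk, Units.val_neg, Units.val_one]
    _ = ((χ ^ m) g) ^ t := by
        rw [MulChar.pow_apply_coe, Units.val_pow_eq_pow_val, map_pow, pow_mul]
    _ = 1 := by rw [hχ, MulChar.one_apply_coe, one_pow]

variable [IsDomain R] {χ : MulChar F R} {A B : Finset F}

lemma mulChar_eq_one_or_neg_one_or_sq_eq_neg_one (hχ : χ ^ 4 = 1) {x : F} (hx : x ≠ 0) :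
    χ x = 1 ∨ χ x = -1 ∨ χ x ^ 2 = -1 := by
  have hx4 : (χ x ^ 2) ^ 2 = 1 := by
    rw [← pow_mul, ← MulChar.pow_apply' _ (by norm_num), hχ, MulChar.one_apply hx.isUnit]
  simpa only [sq_eq_one_iff, or_assoc] using hx4

lemma two_mul_indicator_add (hχ : χ ^ 4 = 1) (hA : ∀ x, x ∈ A ↔ χ x = 1)
    (hB : ∀ x, x ∈ B ↔ χ x = -1) :
    2 * ((A : Set F).indicator 1 + (B : Set F).indicator 1) =
      ⇑(1 : MulChar F R) + ⇑(χ ^ 2) := by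
  classical
  funext x
  simp only [Pi.mul_apply, Pi.add_apply, Pi.ofNat_apply, Set.indicator_apply, Finset.mem_coe, hA,
    hB, MulChar.pow_apply' _ two_ne_zero]
  rcases eq_or_ne x 0 with rfl | hx
  · simp [MulChar.map_zero]
  · rw [MulChar.one_apply hx.isUnit]
    rcases mulChar_eq_one_or_neg_one_or_sq_eq_neg_one hχ hx with h | h | h <;> grind

lemma two_mul_indicator_sub (hχ : χ ^ 4 = 1) (hA : ∀ x, x ∈ A ↔ χ x = 1)
    (hB : ∀ x, x ∈ B ↔ χ x = -1) :
    2 * ((A : Set F).indicator 1 - (B : Set F).indicator 1) = ⇑χ + ⇑(χ⁻¹) := by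
  classical
  have hinv : χ⁻¹ = χ ^ 3 := by rw [inv_eq_iff_mul_eq_one, ← pow_succ', hχ]
  funext x
  simp only [Pi.mul_apply, Pi.add_apply, Pi.sub_apply, Pi.ofNat_apply, Set.indicator_apply,
    Finset.mem_coe, hA, hB, hinv, MulChar.pow_apply' _ three_ne_zero]
  rcases eq_or_ne x 0 with rfl | hx
  · simp [MulChar.map_zero]
  · rcases mulChar_eq_one_or_neg_one_or_sq_eq_neg_one hχ hx with h | h | h <;> grind

lemma eight_mul_outerCount_fibres [Fintype F] [DecidableEq F] (hχ : orderOf χ = 4)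
    (hχ_neg : χ (-1) = 1) (hA : ∀ x, x ∈ A ↔ χ x = 1) (hB : ∀ x, x ∈ B ↔ χ x = -1)
    {d : F} (hd : d ≠ 0) :
    (8 * outerCount ![A, B] d : R) =
      Fintype.card F - 1 - (χ ^ 2) d * (2 + jacobiSum χ χ + jacobiSum χ⁻¹ χ⁻¹) := by
  have hχ4 : χ ^ 4 = 1 := hχ ▸ pow_orderOf_eq_one χ
  have hχ1 : χ ≠ 1 := by rintro rfl; simp at hχ
  have hχ2 : χ ^ 2 ≠ 1 := pow_ne_one_of_lt_orderOf two_ne_zero (by omega)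
  have hχ2_inv : (χ ^ 2)⁻¹ = χ ^ 2 := by rw [inv_eq_iff_mul_eq_one, ← pow_add, hχ4]
  have hχ2_neg : (χ ^ 2) (-1) = 1 := by rw [MulChar.pow_apply' _ two_ne_zero, hχ_neg, one_pow]
  calc (8 * outerCount ![A, B] d : R)
      = correlation (2 * ((A : Set F).indicator 1 + (B : Set F).indicator 1))
            (2 * ((A : Set F).indicator 1 + (B : Set F).indicator 1)) d -
          correlation (2 * ((A : Set F).indicator 1 - (B : Set F).indicator 1))
            (2 * ((A : Set F).indicator 1 - (B : Set F).indicator 1)) d := by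
        rw [outerCount_pair_eq_correlation, correlation_two_mul, correlation_two_mul]
        linear_combination 4 * two_mul_correlation_add_swap ((A : Set F).indicator (1 : F → R))
          ((B : Set F).indicator 1) d
    _ = Fintype.card F - 1 - (χ ^ 2) d * (2 + jacobiSum χ χ + jacobiSum χ⁻¹ χ⁻¹) := by
        rw [two_mul_indicator_add hχ4 hA hB, two_mul_indicator_sub hχ4 hA hB,
          correlation_one_add_quadratic hχ2 hχ2_inv hχ2_neg hd, correlation_add_inv hχ1 hχ_neg hd,
          inv_pow, hχ2_inv]
        ring

end QuarticCharacter

section TwoSquares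

lemma sq_eq_sq_or_sq_eq_sq_of_dvd {p a b c d : ℤ} (hp : p ≠ 0) (hab : a ^ 2 + b ^ 2 = p)
    (hcd : c ^ 2 + d ^ 2 = p) (h : p ∣ a * c - b * d) : a ^ 2 = c ^ 2 ∨ a ^ 2 = d ^ 2 := by
  obtain ⟨k, hk⟩ := h
  have brahmagupta : (p * k) ^ 2 + (a * d + b * c) ^ 2 = p ^ 2 := by
    rw [← hk]
    linear_combination (c ^ 2 + d ^ 2) * hab + p * hcd
  rcases eq_or_ne k 0 with rfl | hk0
  · refine .inr (mul_left_cancel₀ hp ?_)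
    linear_combination -a ^ 2 * hcd + d ^ 2 * hab + (a * c + b * d) * hk
  · have hk_sq : 0 < k ^ 2 := by positivity
    have hzero : a * d + b * c = 0 := by
      rw [← sq_eq_zero_iff]
      nlinarith [sq_nonneg p, sq_nonneg (a * d + b * c)]
    refine .inl (mul_left_cancel₀ hp ?_)
    linear_combination -a ^ 2 * hcd + c ^ 2 * hab + (a * d - b * c) * hzero

lemma sq_eq_sq_or_sq_eq_sq_of_sq_add_sq_eq_prime {p a b c d : ℤ} (hp : Prime p)
    (hab : a ^ 2 + b ^ 2 = p) (hcd : c ^ 2 + d ^ 2 = p) : a ^ 2 = c ^ 2 ∨ a ^ 2 = d ^ 2 := by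
  have hdvd : p ∣ (a * c - b * d) * (a * c - b * -d) :=
    ⟨a ^ 2 - d ^ 2, by linear_combination a ^ 2 * hcd - d ^ 2 * hab⟩
  rcases hp.dvd_or_dvd hdvd with h | h
  · exact sq_eq_sq_or_sq_eq_sq_of_dvd hp.ne_zero hab hcd h
  · simpa only [neg_sq] using
      sq_eq_sq_or_sq_eq_sq_of_dvd hp.ne_zero hab (by rwa [neg_sq]) h

end TwoSquares

section GaussianInt

lemma isPrimitiveRoot_sqrtd : IsPrimitiveRoot (Zsqrtd.sqrtd : GaussianInt) 4 := by
  refine .mk_of_lt _ (by norm_num) (by decide) fun l hl hl4 => ?_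
  interval_cases l <;> decide

lemma inv_eq_ringHomComp_star {M : Type*} [CommMonoid M] (χ : MulChar M GaussianInt) :
    χ⁻¹ = χ.ringHomComp (starRingEnd GaussianInt) := by
  refine inv_eq_iff_mul_eq_one.mpr (MulChar.ext fun u => ?_)
  have hnorm : (χ u).norm = 1 :=
    (Zsqrtd.norm_eq_one_iff' (by norm_num) _).mpr (u.isUnit.map χ)
  rw [MulChar.mul_apply, MulChar.ringHomComp_apply, starRingEnd_apply, ← Zsqrtd.norm_eq_mul_conj,
    hnorm, MulChar.one_apply_coe, Int.cast_one]

lemma jacobiSum_inv_inv {R : Type*} [CommRing R] [Fintype R] (χ φ : MulChar R GaussianInt) :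
    jacobiSum χ⁻¹ φ⁻¹ = star (jacobiSum χ φ) := by
  rw [inv_eq_ringHomComp_star, inv_eq_ringHomComp_star, jacobiSum_ringHomComp, starRingEnd_apply]

variable {F : Type*} [Field F] [Fintype F]

lemma norm_jacobiSum {χ φ : MulChar F GaussianInt} (hχ : χ ≠ 1) (hφ : φ ≠ 1) (hχφ : χ * φ ≠ 1) :
    (jacobiSum χ φ).norm = Fintype.card F := by
  have ne_one {ψ : MulChar F GaussianInt} (hψ : ψ ≠ 1) : ψ.ringHomComp GaussianInt.toComplex ≠ 1 :=
    (MulChar.ringHomComp_ne_one_iff GaussianInt.toComplex_injective).mpr hψ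
  have hchar : ringChar ℂ ≠ ringChar F := by
    rw [ringChar.eq ℂ 0]
    exact (CharP.ringChar_ne_zero_of_finite F).symm
  have hcomplex := jacobiSum_mul_jacobiSum_inv hchar (ne_one hχ) (ne_one hφ)
    (by rw [← MulChar.ringHomComp_mul]; exact ne_one hχφ)
  have hmul : jacobiSum χ φ * jacobiSum χ⁻¹ φ⁻¹ = (Fintype.card F : GaussianInt) := by
    apply GaussianInt.toComplex_injective
    rw [map_mul, map_natCast, ← hcomplex, MulChar.ringHomComp_inv, MulChar.ringHomComp_inv,
      jacobiSum_ringHomComp, jacobiSum_ringHomComp]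
  rw [jacobiSum_inv_inv, ← Zsqrtd.norm_eq_mul_conj] at hmul
  exact_mod_cast hmul

lemma eight_mul_outerCount_fibres_eq_re [DecidableEq F] {χ : MulChar F GaussianInt} {A B : Finset F}
    (hχ : orderOf χ = 4) (hχ_neg : χ (-1) = 1) (hA : ∀ x, x ∈ A ↔ χ x = 1)
    (hB : ∀ x, x ∈ B ↔ χ x = -1) {d : F} (hd : d ≠ 0) :
    (8 * outerCount ![A, B] d : GaussianInt) =
      Fintype.card F - 1 - (χ ^ 2) d * (2 * (1 + (jacobiSum χ χ).re) : ℤ) := by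
  have hre : jacobiSum χ χ + star (jacobiSum χ χ) = (2 * (jacobiSum χ χ).re : ℤ) := by
    ext <;> simp [two_mul]
  rw [eight_mul_outerCount_fibres hχ hχ_neg hA hB hd, jacobiSum_inv_inv, add_assoc, hre]
  push_cast
  ring

lemma four_dvd_one_add_re_jacobiSum {χ : MulChar F GaussianInt} (hχ : orderOf χ = 4)
    (hF : 8 ∣ Fintype.card F - 1) : 4 ∣ 1 + (jacobiSum χ χ).re := by
  classical
  have hχ_neg : χ (-1) = 1 := mulChar_neg_one_eq_one_of_pow_eq_one (hχ ▸ pow_orderOf_eq_one χ) hF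
  have hcount := eight_mul_outerCount_fibres_eq_re (A := Finset.univ.filter (χ · = 1))
    (B := Finset.univ.filter (χ · = -1)) hχ hχ_neg (by simp) (by simp) one_ne_zero
  rw [map_one, one_mul] at hcount
  have hcount_int : (8 * outerCount ![Finset.univ.filter (χ · = 1),
      Finset.univ.filter (χ · = -1)] 1 : ℤ) =
        Fintype.card F - 1 - 2 * (1 + (jacobiSum χ χ).re) := by
    exact_mod_cast hcount
  have := Fintype.card_pos (α := F)
  omega

lemma re_jacobiSum_eq_neg_one {χ : MulChar F GaussianInt} (hχ : orderOf χ = 4) {n : ℕ}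
    (hF : Fintype.card F = 16 * n ^ 2 + 1) (hprime : (Fintype.card F).Prime) :
    (jacobiSum χ χ).re = -1 := by
  have hχ1 : χ ≠ 1 := by rintro rfl; simp at hχ
  have hχ2 : χ * χ ≠ 1 := sq χ ▸ pow_ne_one_of_lt_orderOf two_ne_zero (by omega)
  have hmod : 4 ∣ 1 + (jacobiSum χ χ).re :=
    four_dvd_one_add_re_jacobiSum hχ ⟨2 * n ^ 2, by rw [hF, Nat.add_sub_cancel]; ring⟩
  have hJ : (jacobiSum χ χ).re ^ 2 + (jacobiSum χ χ).im ^ 2 = Fintype.card F := by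
    rw [← norm_jacobiSum hχ1 hχ1 hχ2, Zsqrtd.norm_def]
    ring
  have hn : (4 * n : ℤ) ^ 2 + 1 ^ 2 = Fintype.card F := by
    rw [hF]
    push_cast
    ring
  have hprimeZ : Prime (Fintype.card F : ℤ) := Nat.prime_iff_prime_int.mp hprime
  rcases sq_eq_sq_or_sq_eq_sq_of_sq_add_sq_eq_prime hprimeZ hJ hn with h | h <;>
    rcases sq_eq_sq_iff_eq_or_eq_neg.mp h with h | h <;> omega

lemma outerCount_fibres_eq [DecidableEq F] {χ : MulChar F GaussianInt} {A B : Finset F}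
    (hχ : orderOf χ = 4) {n : ℕ} (hF : Fintype.card F = 16 * n ^ 2 + 1)
    (hprime : (Fintype.card F).Prime) (hA : ∀ x, x ∈ A ↔ χ x = 1) (hB : ∀ x, x ∈ B ↔ χ x = -1)
    {d : F} (hd : d ≠ 0) : outerCount ![A, B] d = 2 * n ^ 2 := by
  have hχ_neg : χ (-1) = 1 := mulChar_neg_one_eq_one_of_pow_eq_one (hχ ▸ pow_orderOf_eq_one χ)
    ⟨2 * n ^ 2, by rw [hF, Nat.add_sub_cancel]; ring⟩
  have hcount := eight_mul_outerCount_fibres_eq_re hχ hχ_neg hA hB hd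
  rw [re_jacobiSum_eq_neg_one hχ hF hprime, hF, add_neg_cancel, mul_zero, Int.cast_zero, mul_zero,
    sub_zero, Nat.cast_add, Nat.cast_one, add_sub_cancel_right] at hcount
  have hcount_nat : 8 * outerCount ![A, B] d = 16 * n ^ 2 := by exact_mod_cast hcount
  omega

end GaussianInt

section CharacterOfGenerator

variable {M R : Type*} [CommMonoid M] [CommRing R]

lemma orderOf_mulChar_of_isPrimitiveRoot {χ : MulChar M R} {α : Mˣ} {f : ℕ}
    (hα : ∀ x, x ∈ Subgroup.zpowers α) (hχ : IsPrimitiveRoot (χ α) f) : orderOf χ = f := by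
  rw [hχ.eq_orderOf, orderOf_eq_orderOf_iff]
  intro k
  rw [MulChar.eq_iff hα, MulChar.pow_apply_coe, MulChar.one_apply_coe]

lemma exists_mulChar_apply_eq [Finite M] {α : Mˣ} (hα : ∀ x, x ∈ Subgroup.zpowers α) {ζ : R}
    (hζ : ζ ^ orderOf α = 1) : ∃ χ : MulChar M R, χ α = ζ := by
  classical
  have := Fintype.ofFinite M
  have hα0 : orderOf α ≠ 0 := (orderOf_pos α).ne'
  obtain ⟨u, rfl⟩ := IsUnit.of_pow_eq_one hζ hα0
  have hu : u ∈ rootsOfUnity (Fintype.card Mˣ) R := by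
    rw [mem_rootsOfUnity, ← Nat.card_eq_fintype_card, ← orderOf_eq_card_of_forall_mem_zpowers hα]
    exact Units.ext (by simpa using hζ)
  exact ⟨MulChar.ofRootOfUnity hu hα, MulChar.ofRootOfUnity_spec hu hα⟩

end CharacterOfGenerator

section CyclotomicClass

variable {F R : Type*} [Field F] [CommRing R]

/-- The `i`-th cyclotomic class `C_i^f = {α ^ (i + f * t) : 0 ≤ t < m}` of order `f` with respect to
a primitive root `α`. The class size `m` is a separate argument, which equals `(|F| - 1) / f` in a
finite field `F`. -/
def cyclotomicClass [DecidableEq F] (α : Fˣ) (f m i : ℕ) : Finset F :=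
  (Finset.range m).image fun t => (α : F) ^ (i + f * t)

lemma card_cyclotomicClass [DecidableEq F] {α : Fˣ} {f m : ℕ} (hf : f ≠ 0)
    (hα : orderOf α = f * m) (i : ℕ) : (cyclotomicClass α f m i).card = m := by
  rw [cyclotomicClass, Finset.card_image_of_injOn, Finset.card_range]
  intro s hs t ht hst
  rw [Finset.coe_range, Set.mem_Iio] at hs ht
  have hmod : i + f * s ≡ i + f * t [MOD f * m] := by
    rw [← hα, ← pow_eq_pow_iff_modEq]
    exact Units.ext (by simpa using hst)
  have hst_mod : s ≡ t [MOD m] := hmod.add_left_cancel'.mul_left_cancel' hf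
  exact hst_mod.eq_of_lt_of_lt hs ht

lemma mem_cyclotomicClass_iff [Finite F] [DecidableEq F] [Nontrivial R] {χ : MulChar F R} {α : Fˣ}
    {f m i : ℕ} (hα : ∀ x, x ∈ Subgroup.zpowers α) (horder : orderOf α = f * m)
    (hχ : IsPrimitiveRoot (χ α) f) (hi : i < f) (x : F) :
    x ∈ cyclotomicClass α f m i ↔ χ x = χ α ^ i := by
  simp only [cyclotomicClass, Finset.mem_image, Finset.mem_range]
  constructor
  · rintro ⟨t, -, rfl⟩
    rw [map_pow, pow_add, pow_mul, hχ.pow_eq_one, one_pow, mul_one]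
  · intro hx
    have hx0 : x ≠ 0 := by
      rintro rfl
      exact (α.isUnit.map χ).pow i |>.ne_zero (by rw [← hx, MulChar.map_zero])
    obtain ⟨k, hk, hkx⟩ : ∃ k < f * m, α ^ k = Units.mk0 x hx0 := by
      simpa [horder] using (mem_zpowers_iff_mem_range_orderOf (x := α)).mp (hα (Units.mk0 x hx0))
    obtain rfl : (α : F) ^ k = x := by simpa using congrArg Units.val hkx
    have hki : k % f = i := by
      refine hχ.pow_inj (Nat.mod_lt k (Nat.zero_lt_of_lt hi)) hi ?_
      rw [← hx, map_pow, hχ.eq_orderOf, pow_mod_orderOf]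
    exact ⟨k / f, Nat.div_lt_of_lt_mul hk, by rw [← hki, Nat.mod_add_div]⟩

end CyclotomicClass

theorem stmt_9 (n p : ℕ) (hp : p = 16 * n ^ 2 + 1) (hprime : p.Prime) (hodd : Odd p)
    (α : (ZMod p)ˣ) (hα : ∀ x : (ZMod p)ˣ, x ∈ Subgroup.zpowers α) :
    -- the 4th-power cyclotomic classes C_i^4 = {α^(i+4t) : 0 ≤ t < 4n²}
    let C : ℕ → Finset (ZMod p) := fun i =>
      (Finset.range (4 * n ^ 2)).image (fun t => ((α : ZMod p)) ^ (i + 4 * t))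
    -- {C_0^4, C_2^4} is a perfect regular DSS(16n²+1, 4n², 2, 2n²)
    (C 0).card = 4 * n ^ 2 ∧ (C 2).card = 4 * n ^ 2 ∧ Disjoint (C 0) (C 2) ∧
    (∀ d : ZMod p, d ≠ 0 → outerCount ![C 0, C 2] d = 2 * n ^ 2) := by
  intro C
  have : Fact p.Prime := ⟨hprime⟩
  have hcard : Fintype.card (ZMod p) = 16 * n ^ 2 + 1 := (ZMod.card p).trans hp
  have hα_order : orderOf α = 4 * (4 * n ^ 2) := by
    rw [orderOf_eq_card_of_forall_mem_zpowers hα, Nat.card_eq_fintype_card, Fintype.card_units,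
      hcard, Nat.add_sub_cancel]
    ring
  obtain ⟨χ, hχα⟩ := exists_mulChar_apply_eq (ζ := (Zsqrtd.sqrtd : GaussianInt)) hα
    (by rw [hα_order, pow_mul, isPrimitiveRoot_sqrtd.pow_eq_one, one_pow])
  have hχ : IsPrimitiveRoot (χ α) 4 := hχα ▸ isPrimitiveRoot_sqrtd
  have hC {i : ℕ} (hi : i < 4) (x : ZMod p) : x ∈ C i ↔ χ x = χ α ^ i :=
    mem_cyclotomicClass_iff hα hα_order hχ hi x
  have hC0 (x : ZMod p) : x ∈ C 0 ↔ χ x = 1 := by rw [hC four_pos, pow_zero]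
  have hC2 (x : ZMod p) : x ∈ C 2 ↔ χ x = -1 := by rw [hC (by norm_num), hχα]; rfl
  refine ⟨card_cyclotomicClass four_ne_zero hα_order 0,
    card_cyclotomicClass four_ne_zero hα_order 2, ?_, fun d hd => ?_⟩
  · refine Finset.disjoint_left.mpr fun x h0 h2 => ?_
    exact absurd (((hC0 x).mp h0).symm.trans ((hC2 x).mp h2)) (by decide)
  · exact outerCount_fibres_eq (orderOf_mulChar_of_isPrimitiveRoot hα hχ) hcard
      (by rwa [ZMod.card]) hC0 hC2 hd
end
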